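/- Let S = { x ∈ ℝⁿ : g₁(x) ≥ 0, …, gₘ(x) ≥ 0 } be a compact convex set defined by real polynomials g₁, …, gₘ, and assume S has nonempty interior. If for every u ∈ ∂S and every index i with gᵢ(u) = 0, the polynomial gᵢ is either sos-concave or strictly quasi-concave at u, then S is SDP representable. -/

import Mathlib

open MvPolynomial Metric Set Pointwise Filter

noncomputable section

/-- `ℝⁿ` with the Euclidean norm. -/
abbrev Rn (n : ℕ) : Type := EuclideanSpace ℝ (Fin n)

/-- A set `S ⊆ ℝⁿ` is SDP representable if it is the projection of a spectrahedron:
there are symmetric matrices `A₀, A i, B j` with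
`S = { x | ∃ u, A₀ + Σ xᵢ Aᵢ + Σ uⱼ Bⱼ ⪰ 0 }`. -/
def IsSDPRepresentable {n : ℕ} (S : Set (Rn n)) : Prop :=
  ∃ (N d : ℕ) (A₀ : Matrix (Fin d) (Fin d) ℝ)
    (A : Fin n → Matrix (Fin d) (Fin d) ℝ) (B : Fin N → Matrix (Fin d) (Fin d) ℝ),
    A₀.IsSymm ∧ (∀ i, (A i).IsSymm) ∧ (∀ j, (B j).IsSymm) ∧
    S = {x : Rn n | ∃ u : Fin N → ℝ,
      (A₀ + ∑ i, x i • A i + ∑ j, u j • B j).PosSemidef}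

/-- Evaluation of a polynomial at a point of `ℝⁿ`. -/
def peval {n : ℕ} (g : MvPolynomial (Fin n) ℝ) (x : Rn n) : ℝ :=
  MvPolynomial.eval (fun i => x i) g

/-- The gradient `∇g(u)` of a polynomial. -/
def pgrad {n : ℕ} (g : MvPolynomial (Fin n) ℝ) (u : Rn n) : Fin n → ℝ :=
  fun i => MvPolynomial.eval (fun j => u j) (MvPolynomial.pderiv i g)

/-- The Hessian `∇²g(u)` of a polynomial. -/
def phess {n : ℕ} (g : MvPolynomial (Fin n) ℝ) (u : Rn n) : Matrix (Fin n) (Fin n) ℝ :=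
  Matrix.of fun i j =>
    MvPolynomial.eval (fun k => u k) (MvPolynomial.pderiv i (MvPolynomial.pderiv j g))

/-- A polynomial `g` is sos-concave if `-∇²g(x) = W(x)ᵀ W(x)` for some
(possibly nonsquare) matrix polynomial `W`. -/
def SosConcave {n : ℕ} (g : MvPolynomial (Fin n) ℝ) : Prop :=
  ∃ (k : ℕ) (W : Fin k → Fin n → MvPolynomial (Fin n) ℝ),
    ∀ i j, - MvPolynomial.pderiv i (MvPolynomial.pderiv j g) = ∑ l, W l i * W l j

/-- `g` is quasi-concave at `u` : `-vᵀ∇²g(u)v ≥ 0` for every `v` with `∇g(u)ᵀv = 0`. -/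
def QuasiConcaveAt {n : ℕ} (g : MvPolynomial (Fin n) ℝ) (u : Rn n) : Prop :=
  ∀ v : Fin n → ℝ, (∑ i, pgrad g u i * v i) = 0 →
    0 ≤ -(∑ i, ∑ j, v i * phess g u i j * v j)

/-- `g` is strictly quasi-concave at `u` : if `∇g(u) ≠ 0` then `-vᵀ∇²g(u)v > 0`
for all nonzero `v ⊥ ∇g(u)`; if `∇g(u) = 0` then `-∇²g(u)` is positive definite. -/
def StrictlyQuasiConcaveAt {n : ℕ} (g : MvPolynomial (Fin n) ℝ) (u : Rn n) : Prop :=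
  (pgrad g u ≠ 0 ∧ ∀ v : Fin n → ℝ, v ≠ 0 → (∑ i, pgrad g u i * v i) = 0 →
      0 < -(∑ i, ∑ j, v i * phess g u i j * v j)) ∨
  (pgrad g u = 0 ∧ (-(phess g u)).PosDef)

/-- The convex boundary `∂_c T` : points of `T` minimizing some unit linear functional. -/
def convexBoundary {n : ℕ} (T : Set (Rn n)) : Set (Rn n) :=
  {u ∈ T | ∃ l : Rn n, ‖l‖ = 1 ∧ ∀ x ∈ T, (∑ i, l i * u i) ≤ ∑ i, l i * x i}

/-- `v` is a nonsingular point of `∂T` (w.r.t. defining polynomials `g`):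
exactly one defining polynomial vanishes at `v`, with nonvanishing gradient. -/
def IsNonsingularBoundaryPoint {n m : ℕ} (g : Fin m → MvPolynomial (Fin n) ℝ)
    (T : Set (Rn n)) (v : Rn n) : Prop :=
  v ∈ frontier T ∧ ∃ i, peval (g i) v = 0 ∧ pgrad (g i) v ≠ 0 ∧
    ∀ j, peval (g j) v = 0 → j = i

/-- A polynomial is SOS if it is a finite sum of squares of polynomials. -/
def IsSOSPoly {n : ℕ} (p : MvPolynomial (Fin n) ℝ) : Prop :=
  ∃ (k : ℕ) (q : Fin k → MvPolynomial (Fin n) ℝ), p = ∑ i, (q i) ^ 2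

/-- The polynomial `δ² - ‖x - u‖²`. -/
def ballPoly {n : ℕ} (u : Rn n) (δ : ℝ) : MvPolynomial (Fin n) ℝ :=
  MvPolynomial.C (δ ^ 2) - ∑ i, (MvPolynomial.X i - MvPolynomial.C (u i)) ^ 2

/-- The family `h₁, …, h_{m₂}` extended by the ball polynomial `h_m(x) = δ² - ‖x-u‖²`. -/
def extFamily {n m2 : ℕ} (h : Fin m2 → MvPolynomial (Fin n) ℝ) (u : Rn n) (δ : ℝ) :
    Fin (m2 + 1) → MvPolynomial (Fin n) ℝ :=
  Fin.snoc h (ballPoly u δ)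

/-- The positive definite Lagrange Hessian (PDLH) condition at `u` with radius `δu`,
for the set `T = {x | f(x) = 0, h(x) ≥ 0}`. -/
def PDLHAt {n m1 m2 : ℕ} (f : Fin m1 → MvPolynomial (Fin n) ℝ)
    (h : Fin m2 → MvPolynomial (Fin n) ℝ) (T : Set (Rn n)) (u : Rn n) (δu : ℝ) : Prop :=
  ∀ l : Rn n, ‖l‖ = 1 → ∀ δ : ℝ, 0 < δ → δ ≤ δu →
    ∀ v ∈ T ∩ closedBall u δ,
      (∀ x ∈ T ∩ closedBall u δ, (∑ i, l i * v i) ≤ ∑ i, l i * x i) →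
      ∃ (lam : Fin m1 → ℝ) (mu : Fin (m2 + 1) → ℝ),
        (∀ j, 0 ≤ mu j) ∧
        (∀ j, mu j * peval (extFamily h u δ j) v = 0) ∧
        (∀ i, l i = (∑ k, lam k * pgrad (f k) v i) +
            ∑ j, mu j * pgrad (extFamily h u δ j) v i) ∧
        ∀ x ∈ closedBall u δ,
          (Matrix.of (fun i i' : Fin n =>
            -(∑ k, lam k * phess (f k) x i i') -
              ∑ j, mu j * phess (extFamily h u δ j) x i i')).PosDef

/-- `Z(g) ∩ ∂S` has strictly convex shape with respect to `S`. -/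
def StrictlyConvexShape {n : ℕ} (g : MvPolynomial (Fin n) ℝ) (S : Set (Rn n)) : Prop :=
  ∃ Y U : Set (Rn n), IsOpen U ∧ Y = {x | peval g x = 0} ∩ U ∧
    {x | peval g x = 0} ∩ frontier S ⊆ Y ∧
    (∀ p ∈ closure Y, pgrad g p ≠ 0) ∧
    ∀ p ∈ closure Y,
      (∃ ε : ℝ, (ε = 1 ∨ ε = -1) ∧
        ∀ q ∈ S ∪ closure Y, ε * (∑ i, pgrad g p i * (q i - p i)) ≤ 0) ∧
      ∀ q ∈ S ∪ closure Y, (∑ i, pgrad g p i * (q i - p i)) = 0 → q = p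

/-!
By compactness, and because the convex hull of a finite union of bounded spectrahedral shadows is
again one, it suffices to represent `S` near each of its points `u`, and hence to represent each
`{g i ≥ 0}` near `u`. Only the `g i` vanishing at `u` matter. If such a `g` is strictly
quasi-concave at `u`, then for large `M` the polynomial `p = g - (M / 2) * g ^ 2` has negative
definite Hessian at `u` and, near `u`, the same sign as `g`; if `g` is sos-concave, take `p = g`.
In both cases `-yᵀ ∇²p(z) y`, as a polynomial in `(z, y)`, is a combination
`s₀ + ∑ᵢ sᵢ * (δ² - (zᵢ - uᵢ)²)` with sums of squares `s₀, sᵢ`: in the first case because, modulo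
the quadratic module of a small box, every polynomial is close to its value at `u`. Such a
certificate gives Jensen's inequality `L p ≤ p (L X)` for all functionals `L` with `L 1 = 1` that
are nonnegative on a suitable truncation of this quadratic module, so the truncated moment
relaxation of `p ≥ 0` on the box is exact.
-/

open scoped Matrix Topology

/-! ### Spectrahedral shadows -/

/-- A spectrahedral shadow that is a cone, presented as the image of a cone of positive
semidefinite matrices under a linear relation `T`.  Allowing relations instead of linear maps
absorbs both the lifting variables and any linear equations. -/
def IsShadowCone {Z : Type*} [AddCommGroup Z] [Module ℝ Z] (K : Set Z) : Prop :=
  ∃ (ι : Type) (_ : Finite ι) (T : Submodule ℝ (Z × Matrix ι ι ℝ)),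
    K = {z | ∃ M, (z, M) ∈ T ∧ M.PosSemidef}

lemma posSemidef_fromBlocks_zero_iff {ι κ : Type*} [Finite ι] [Finite κ]
    {A : Matrix ι ι ℝ} {D : Matrix κ κ ℝ} :
    (Matrix.fromBlocks A 0 0 D).PosSemidef ↔ A.PosSemidef ∧ D.PosSemidef := by
  cases nonempty_fintype ι
  cases nonempty_fintype κ
  refine ⟨fun h => ⟨h.submatrix Sum.inl, h.submatrix Sum.inr⟩, fun ⟨hA, hD⟩ => ?_⟩
  refine .of_dotProduct_mulVec_nonneg (hA.1.fromBlocks (by simp) hD.1) fun v => ?_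
  rw [← Sum.elim_comp_inl_inr v, Matrix.fromBlocks_mulVec, star_trivial, Sum.elim_comp_inl,
    Sum.elim_comp_inr, sumElim_dotProduct_sumElim]
  simpa using add_nonneg (hA.dotProduct_mulVec_nonneg (v ∘ Sum.inl))
    (hD.dotProduct_mulVec_nonneg (v ∘ Sum.inr))

namespace IsShadowCone

variable {Z Z' : Type*} [AddCommGroup Z] [Module ℝ Z] [AddCommGroup Z'] [Module ℝ Z']
  {K : Set Z}

lemma add_mem (hK : IsShadowCone K) {z z' : Z} (hz : z ∈ K) (hz' : z' ∈ K) : z + z' ∈ K := by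
  obtain ⟨ι, _, T, rfl⟩ := hK
  obtain ⟨⟨M, hM, hMpos⟩, M', hM', hMpos'⟩ := And.intro hz hz'
  exact ⟨M + M', T.add_mem hM hM', hMpos.add hMpos'⟩

lemma smul_mem (hK : IsShadowCone K) {r : ℝ} (hr : 0 ≤ r) {z : Z} (hz : z ∈ K) : r • z ∈ K := by
  obtain ⟨ι, _, T, rfl⟩ := hK
  obtain ⟨M, hM, hMpos⟩ := hz
  exact ⟨r • M, T.smul_mem r hM, hMpos.smul hr⟩

lemma preimage (hK : IsShadowCone K) (f : Z' →ₗ[ℝ] Z) : IsShadowCone (f ⁻¹' K) := by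
  obtain ⟨ι, _, T, rfl⟩ := hK
  exact ⟨ι, inferInstance, T.comap (f.prodMap .id), rfl⟩

lemma image (hK : IsShadowCone K) (f : Z →ₗ[ℝ] Z') : IsShadowCone (f '' K) := by
  obtain ⟨ι, _, T, rfl⟩ := hK
  refine ⟨ι, inferInstance, T.map (f.prodMap .id), ?_⟩
  ext z'
  constructor
  · rintro ⟨z, ⟨M, hM, hMpos⟩, rfl⟩
    exact ⟨M, ⟨(z, M), hM, rfl⟩, hMpos⟩
  · rintro ⟨_, ⟨⟨z, M⟩, hM, hf⟩, hMpos⟩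
    obtain ⟨rfl, rfl⟩ := Prod.mk.inj hf
    exact ⟨z, ⟨M, hM, hMpos⟩, rfl⟩

lemma inter (hK : IsShadowCone K) {K' : Set Z} (hK' : IsShadowCone K') :
    IsShadowCone (K ∩ K') := by
  obtain ⟨ι, _, T, rfl⟩ := hK
  obtain ⟨κ, _, T', rfl⟩ := hK'
  refine ⟨ι ⊕ κ, inferInstance,
    { carrier := {z | (z.1, z.2.toBlocks₁₁) ∈ T ∧ (z.1, z.2.toBlocks₂₂) ∈ T'}
      add_mem' := fun h h' => ⟨T.add_mem h.1 h'.1, T'.add_mem h.2 h'.2⟩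
      zero_mem' := ⟨T.zero_mem, T'.zero_mem⟩
      smul_mem' := fun r _ h => ⟨T.smul_mem r h.1, T'.smul_mem r h.2⟩ }, ?_⟩
  ext z
  constructor
  · rintro ⟨⟨M, hM, hMpos⟩, M', hM', hMpos'⟩
    exact ⟨.fromBlocks M 0 0 M', ⟨hM, hM'⟩, posSemidef_fromBlocks_zero_iff.2 ⟨hMpos, hMpos'⟩⟩
  · rintro ⟨M, ⟨hM, hM'⟩, hMpos⟩
    exact ⟨⟨_, hM, hMpos.submatrix Sum.inl⟩, _, hM', hMpos.submatrix Sum.inr⟩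

lemma setOf_posSemidef {ι : Type} [Finite ι] (f : Z →ₗ[ℝ] Matrix ι ι ℝ) :
    IsShadowCone {z | (f z).PosSemidef} := by
  refine ⟨ι, inferInstance, f.graph, ?_⟩
  simp [LinearMap.mem_graph_iff]

lemma setOf_nonneg (f : Z →ₗ[ℝ] ℝ) : IsShadowCone {z | 0 ≤ f z} := by
  convert setOf_posSemidef (Matrix.diagonalLinearMap Unit ℝ ℝ ∘ₗ .pi fun _ => f) using 3
  simp [Matrix.posSemidef_diagonal_iff]

lemma univ : IsShadowCone (Set.univ : Set Z) := by
  simpa using setOf_nonneg (0 : Z →ₗ[ℝ] ℝ)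

lemma iInter {ι : Type*} [Finite ι] {K : ι → Set Z} (hK : ∀ i, IsShadowCone (K i)) :
    IsShadowCone (⋂ i, K i) := by
  cases nonempty_fintype ι
  rw [← iInf_eq_iInter, ← Finset.inf_univ_eq_iInf]
  exact Finset.inf_induction univ (fun _ h _ h' => h.inter h') fun i _ => hK i

lemma add (hK : IsShadowCone K) {K' : Set Z} (hK' : IsShadowCone K') : IsShadowCone (K + K') := by
  convert ((hK.preimage (.fst ℝ Z Z)).inter (hK'.preimage (.snd ℝ Z Z))).image (.coprod .id .id)
    using 1
  ext z
  simp [Set.mem_add, and_assoc]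

lemma setOf_bilinForm_nonneg {V : Type*} [AddCommGroup V] [Module ℝ V] [Module.Finite ℝ V]
    (B : Z →ₗ[ℝ] LinearMap.BilinForm ℝ V) (hB : ∀ z, (B z).IsSymm) :
    IsShadowCone {z | ∀ v, 0 ≤ B z v v} := by
  let e := Module.finBasis ℝ V
  convert setOf_posSemidef ((LinearMap.BilinForm.toMatrix e).toLinearMap ∘ₗ B) using 1
  ext z
  constructor
  · refine fun h => .of_dotProduct_mulVec_nonneg ?_ fun v => ?_
    · ext i j
      simpa using (hB z).eq (e j) (e i)
    · exact (h _).trans_eq (LinearMap.BilinForm.dotProduct_toMatrix_mulVec e (B z) v v).symm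
  · intro h v
    rw [LinearMap.BilinForm.apply_eq_dotProduct_toMatrix_mulVec e]
    exact h.dotProduct_mulVec_nonneg (e.repr v)

lemma setOf_nonneg_mul_sq {P : Type*} [CommRing P] [Algebra ℝ P] (U : Submodule ℝ P)
    [Module.Finite ℝ U] (g : P) :
    IsShadowCone {L : P →ₗ[ℝ] ℝ | ∀ q ∈ U, 0 ≤ L (g * q ^ 2)} := by
  let B : (P →ₗ[ℝ] ℝ) →ₗ[ℝ] LinearMap.BilinForm ℝ U :=
    LinearMap.mk₂ ℝ (fun L q => (L ∘ₗ LinearMap.mulLeft ℝ (g * q)) ∘ₗ U.subtype)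
      (fun _ _ _ => rfl) (fun _ _ _ => rfl)
      (fun _ _ _ => by ext; simp [mul_add, add_mul, mul_assoc])
      (fun _ _ _ => by ext; simp [mul_assoc])
  convert setOf_bilinForm_nonneg B fun L => ⟨fun q r => by simp [B, mul_comm]⟩ using 3
  simp [B, sq]

end IsShadowCone

/-- A spectrahedral shadow: a section at height `1` of a cone that is a spectrahedral shadow.
Passing to cones makes all linear matrix inequalities homogeneous. -/
def IsSpectrahedralShadow {V : Type*} [AddCommGroup V] [Module ℝ V] (C : Set V) : Prop :=
  ∃ K : Set (ℝ × V), IsShadowCone K ∧ C = {x | (1, x) ∈ K}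

namespace IsSpectrahedralShadow

section Module

variable {V V' : Type*} [AddCommGroup V] [Module ℝ V] [AddCommGroup V'] [Module ℝ V']
  {C D : Set V}

lemma convex (hC : IsSpectrahedralShadow C) : Convex ℝ C := by
  obtain ⟨K, hK, rfl⟩ := hC
  intro x hx y hy a b ha hb hab
  simpa [hab] using hK.add_mem (hK.smul_mem ha hx) (hK.smul_mem hb hy)

lemma inter (hC : IsSpectrahedralShadow C) (hD : IsSpectrahedralShadow D) :
    IsSpectrahedralShadow (C ∩ D) := by
  obtain ⟨⟨K, hK, rfl⟩, L, hL, rfl⟩ := And.intro hC hD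
  exact ⟨K ∩ L, hK.inter hL, rfl⟩

lemma preimage (hC : IsSpectrahedralShadow C) (f : V' →ₗ[ℝ] V) :
    IsSpectrahedralShadow (f ⁻¹' C) := by
  obtain ⟨K, hK, rfl⟩ := hC
  exact ⟨_, hK.preimage (.prodMap .id f), rfl⟩

lemma setOf_nonneg_add (a : ℝ) (f : V →ₗ[ℝ] ℝ) : IsSpectrahedralShadow {x | 0 ≤ a + f x} :=
  ⟨_, .setOf_nonneg (.coprod (.toSpanSingleton ℝ ℝ a) f), by simp⟩

lemma univ : IsSpectrahedralShadow (Set.univ : Set V) :=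
  ⟨_, .univ, rfl⟩

lemma empty : IsSpectrahedralShadow (∅ : Set V) := by
  convert setOf_nonneg_add (-1) (0 : V →ₗ[ℝ] ℝ)
  ext
  simp

lemma iInter {ι : Type*} [Finite ι] {C : ι → Set V} (hC : ∀ i, IsSpectrahedralShadow (C i)) :
    IsSpectrahedralShadow (⋂ i, C i) := by
  cases nonempty_fintype ι
  rw [← iInf_eq_iInter, ← Finset.inf_univ_eq_iInf]
  exact Finset.inf_induction univ (fun _ h _ h' => h.inter h') fun i _ => hC i

end Module

lemma pi_closedBall {ι : Type*} [Fintype ι] (c : ι → ℝ) {r : ℝ} (hr : 0 ≤ r) :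
    IsSpectrahedralShadow (closedBall c r) := by
  have hslab : ∀ i, IsSpectrahedralShadow {x : ι → ℝ | |x i - c i| ≤ r} := by
    intro i
    have hslab_eq : {x : ι → ℝ | |x i - c i| ≤ r} =
        {x | 0 ≤ r + c i + (-LinearMap.proj i : (ι → ℝ) →ₗ[ℝ] ℝ) x} ∩
          {x | 0 ≤ r - c i + (LinearMap.proj i : (ι → ℝ) →ₗ[ℝ] ℝ) x} := by
      ext x
      suffices |x i - c i| ≤ r ↔ 0 ≤ r + c i + -x i ∧ 0 ≤ r - c i + x i by simpa
      rw [abs_le]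
      constructor <;> intro h <;> constructor <;> linarith [h.1, h.2]
    exact hslab_eq ▸ (setOf_nonneg_add _ _).inter (setOf_nonneg_add _ _)
  convert iInter hslab
  ext x
  simp [dist_pi_le_iff hr, Real.dist_eq]

section Normed

variable {V : Type*} [NormedAddCommGroup V] [NormedSpace ℝ V]

lemma mem_smul_of_isBounded_slice {K : Set (ℝ × V)} (hK : IsShadowCone K)
    (hne : {x | (1, x) ∈ K}.Nonempty) (hb : Bornology.IsBounded {x | (1, x) ∈ K})
    {s : ℝ} (hs : 0 ≤ s) {y : V} (hy : (s, y) ∈ K) : y ∈ s • {x | (1, x) ∈ K} := by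
  rcases hs.eq_or_lt with rfl | hs
  · obtain ⟨x₀, hx₀⟩ := hne
    obtain ⟨R, hR⟩ := isBounded_iff_forall_norm_le.1 hb
    have hray : ∀ t : ℝ, 0 ≤ t → t * ‖y‖ ≤ R + ‖x₀‖ := fun t ht => by
      have hmem : (1, x₀ + t • y) ∈ K := by simpa using hK.add_mem hx₀ (hK.smul_mem ht hy)
      calc t * ‖y‖ = ‖x₀ + t • y - x₀‖ := by simp [norm_smul, abs_of_nonneg ht]
        _ ≤ R + ‖x₀‖ := (norm_sub_le _ _).trans (by gcongr; exact hR _ hmem)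
    have hy0 : y = 0 := by
      by_contra hy0
      have hpos : 0 < ‖y‖ := norm_pos_iff.2 hy0
      have := (norm_nonneg _).trans (hR _ hx₀)
      have := hray ((R + ‖x₀‖ + 1) / ‖y‖) (by positivity)
      rw [div_mul_cancel₀ _ hpos.ne'] at this
      linarith
    exact ⟨x₀, hx₀, by simp [hy0]⟩
  · exact ⟨s⁻¹ • y, by simpa [hs.ne'] using hK.smul_mem (inv_nonneg.2 hs.le) hy,
      smul_inv_smul₀ hs.ne' y⟩

variable {C D : Set V}

lemma convexHull_union (hC : IsSpectrahedralShadow C) (hD : IsSpectrahedralShadow D)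
    (hCb : Bornology.IsBounded C) (hDb : Bornology.IsBounded D) :
    IsSpectrahedralShadow (convexHull ℝ (C ∪ D)) := by
  rcases C.eq_empty_or_nonempty with rfl | hCne
  · simpa [hD.convex.convexHull_eq] using hD
  rcases D.eq_empty_or_nonempty with rfl | hDne
  · simpa [hC.convex.convexHull_eq] using hC
  rw [hC.convex.convexHull_union hD.convex hCne hDne]
  obtain ⟨⟨K, hK, rfl⟩, L, hL, rfl⟩ := And.intro hC hD
  have hpos := IsShadowCone.setOf_nonneg (LinearMap.fst ℝ ℝ V)
  refine ⟨_, (hK.inter hpos).add (hL.inter hpos), ?_⟩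
  ext x
  rw [mem_convexJoin]
  constructor
  · rintro ⟨y, hy, z, hz, a, b, ha, hb, hab, rfl⟩
    refine Set.mem_add.2 ⟨a • (1, y), ⟨hK.smul_mem ha hy, ?_⟩, b • (1, z),
      ⟨hL.smul_mem hb hz, ?_⟩, ?_⟩ <;> simp [ha, hb, hab]
  · rintro ⟨⟨a, y⟩, ⟨hy, ha⟩, ⟨b, z⟩, ⟨hz, hb⟩, hsum⟩
    obtain ⟨hab, rfl⟩ := Prod.mk.inj hsum
    obtain ⟨y', hy', hay⟩ := mem_smul_of_isBounded_slice hK hCne hCb ha hy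
    obtain ⟨z', hz', hbz⟩ := mem_smul_of_isBounded_slice hL hDne hDb hb hz
    exact ⟨y', hy', z', hz', a, b, ha, hb, hab, congrArg₂ (· + ·) hay hbz⟩

lemma convexHull_biUnion {ι : Type*} (t : Finset ι) {C : ι → Set V}
    (hC : ∀ i ∈ t, IsSpectrahedralShadow (C i)) (hb : ∀ i ∈ t, Bornology.IsBounded (C i)) :
    IsSpectrahedralShadow (convexHull ℝ (⋃ i ∈ t, C i)) := by
  classical
  induction t using Finset.induction_on with
  | empty => simpa using empty
  | insert i t _ ih =>
    rw [Finset.forall_mem_insert] at hC hb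
    rw [Finset.set_biUnion_insert, ← convexHull_convexHull_union_right]
    refine hC.1.convexHull_union (ih hC.2 hb.2) hb.1 ?_
    exact isBounded_convexHull.2 ((Bornology.isBounded_biUnion t.finite_toSet).2 hb.2)

end Normed

end IsSpectrahedralShadow

section Extraction

variable {n : ℕ}

lemma isSDPRepresentable_of_linearMap {F ι : Type*} [AddCommGroup F] [Module ℝ F]
    [Module.Finite ℝ F] [Finite ι] (Φ : (ℝ × Rn n) × F →ₗ[ℝ] Matrix ι ι ℝ)
    (hΦ : ∀ z, (Φ z).IsSymm) :
    IsSDPRepresentable {x : Rn n | ∃ u, (Φ ((1, x), u)).PosSemidef} := by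
  let b := Module.finBasis ℝ F
  let e := Finite.equivFin ι
  let A := (Matrix.reindexLinearEquiv ℝ ℝ e e).toLinearMap ∘ₗ Φ
  refine ⟨_, _, A ((1, 0), 0), fun i => A ((0, EuclideanSpace.single i 1), 0),
    fun j => A ((0, 0), b j), (hΦ _).submatrix _, fun i => (hΦ _).submatrix _,
    fun j => (hΦ _).submatrix _, ?_⟩
  ext x
  have hA : ∀ w : Fin _ → ℝ, A ((1, 0), 0) + ∑ i, x i • A ((0, EuclideanSpace.single i 1), 0)
      + ∑ j, w j • A ((0, 0), b j) = A ((1, x), b.equivFun.symm w) := by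
    intro w
    have hx : ∑ i, x i • EuclideanSpace.single i (1 : ℝ) = x := by
      simpa using (EuclideanSpace.basisFun (Fin n) ℝ).sum_repr x
    have hdecomp : ((1, x), b.equivFun.symm w) = ((1, 0), 0) +
        ∑ i, x i • ((0, EuclideanSpace.single i 1), 0) +
        ∑ j, w j • (((0, 0), b j) : (ℝ × Rn n) × F) := by
      simp [Prod.ext_iff, Prod.fst_sum, Prod.snd_sum, hx]
    simp only [hdecomp, map_add, map_sum, map_smul]
  have hpos : ∀ z, (A z).PosSemidef ↔ (Φ z).PosSemidef := fun z =>
    Matrix.posSemidef_submatrix_equiv e.symm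
  simp only [Set.mem_ofPred_eq, hA, hpos]
  exact b.equivFun.symm.toEquiv.exists_congr_right.symm

lemma IsShadowCone.exists_symmetric_linearMap {Z : Type*} [AddCommGroup Z] [Module ℝ Z]
    [Module.Finite ℝ Z] {K : Set Z} (hK : IsShadowCone K) :
    ∃ (ι κ : Type) (_ : Finite ι) (_ : Finite κ)
      (Φ : Z × Matrix ι ι ℝ →ₗ[ℝ] Matrix κ κ ℝ),
      (∀ w, (Φ w).IsSymm) ∧ K = {z | ∃ N, (Φ (z, N)).PosSemidef} := by
  classical
  obtain ⟨ι, _, T, rfl⟩ := hK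
  let b := Module.finBasis ℝ ((Z × Matrix ι ι ℝ) ⧸ T)
  let E := b.equivFun.toLinearMap ∘ₗ T.mkQ
  have hE : ∀ w, E w = 0 ↔ w ∈ T := fun w => by simp [E, -Module.Basis.equivFun_apply]
  let sym := LinearMap.id + (Matrix.transposeLinearEquiv ι ι ℝ ℝ).toLinearMap
  let F := E ∘ₗ LinearMap.prodMap .id sym
  let D := Matrix.diagonalLinearMap _ ℝ ℝ ∘ₗ
    (LinearEquiv.sumArrowLequivProdArrow _ _ ℝ ℝ).symm.toLinearMap ∘ₗ F.prod (-F)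
  have hsym : ∀ N, (sym N).IsSymm := Matrix.isSymm_add_transpose_self
  have hD : ∀ w, (D w).PosSemidef ↔ (w.1, sym w.2) ∈ T := fun w => by
    suffices (∀ i, 0 ≤ F w i) ∧ (∀ i, F w i ≤ 0) ↔ F w = 0 by
      simpa [D, Matrix.posSemidef_diagonal_iff, F, hE] using this
    rw [← Pi.le_def (y := F w), le_antisymm_iff, and_comm]
    rfl
  refine ⟨ι, _, inferInstance, inferInstance,
    { toFun := fun w => .fromBlocks (sym w.2) 0 0 (D w)
      map_add' := fun z w => by simp [-Matrix.fromBlocks_apply₁₁, Matrix.fromBlocks_add]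
      map_smul' := fun r z => by simp [Matrix.fromBlocks_smul] }, ?_, ?_⟩
  · exact fun w => .fromBlocks (hsym _) (by simp) (Matrix.isSymm_diagonal _)
  · ext z
    change _ ↔ ∃ N, (Matrix.fromBlocks (sym N) 0 0 (D (z, N))).PosSemidef
    simp only [posSemidef_fromBlocks_zero_iff, hD]
    constructor
    · rintro ⟨M, hM, hMpos⟩
      have hMsym : sym ((1 / 2 : ℝ) • M) = M := by
        have hMt : Mᵀ = M := by simpa [Matrix.IsHermitian] using hMpos.1
        norm_num [sym, hMt, ← add_smul]
      exact ⟨(1 / 2 : ℝ) • M, by rwa [hMsym], by rwa [hMsym]⟩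
    · rintro ⟨N, hNpos, hN⟩
      exact ⟨sym N, hN, hNpos⟩

lemma IsSpectrahedralShadow.isSDPRepresentable {S : Set (Rn n)} (hS : IsSpectrahedralShadow S) :
    IsSDPRepresentable S := by
  obtain ⟨_, hK, rfl⟩ := hS
  obtain ⟨ι, κ, _, _, Φ, hΦ, rfl⟩ := hK.exists_symmetric_linearMap
  exact isSDPRepresentable_of_linearMap Φ hΦ

end Extraction

/-! ### Local shadows -/

/-- `S` coincides near `c` with a spectrahedral shadow. -/
def IsShadowAt {V : Type*} [NormedAddCommGroup V] [NormedSpace ℝ V] (S : Set V) (c : V) : Prop :=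
  ∃ R, IsSpectrahedralShadow R ∧ R =ᶠ[𝓝 c] S

section Local

variable {V W : Type*} [NormedAddCommGroup V] [NormedSpace ℝ V] [NormedAddCommGroup W]
  [NormedSpace ℝ W] {S : Set V} {c : V}

lemma IsShadowAt.of_mem_nhds (hS : S ∈ 𝓝 c) : IsShadowAt S c :=
  ⟨Set.univ, .univ, (eventuallyEq_univ.2 hS).symm⟩

lemma IsShadowAt.congr {S' : Set V} (hS : IsShadowAt S c) (h : S =ᶠ[𝓝 c] S') :
    IsShadowAt S' c :=
  let ⟨R, hR, hRS⟩ := hS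
  ⟨R, hR, hRS.trans h⟩

lemma IsShadowAt.iInter {ι : Type*} [Finite ι] {S : ι → Set V} (hS : ∀ i, IsShadowAt (S i) c) :
    IsShadowAt (⋂ i, S i) c := by
  choose R hR hRS using hS
  exact ⟨_, .iInter hR, .iInter hRS⟩

lemma IsShadowAt.preimage (f : W →L[ℝ] V) {w : W} (hS : IsShadowAt S (f w)) :
    IsShadowAt (f ⁻¹' S) w := by
  obtain ⟨R, hR, hRS⟩ := hS
  exact ⟨_, hR.preimage f.toLinearMap, eventuallyEq_set.2 <|
    f.continuous.continuousAt.eventually (eventuallyEq_set.1 hRS)⟩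

variable [FiniteDimensional ℝ V]

lemma exists_isSpectrahedralShadow_mem_nhds {U : Set V} (hU : U ∈ 𝓝 c) :
    ∃ B ∈ 𝓝 c, B ⊆ U ∧ IsSpectrahedralShadow B := by
  let e := (Module.finBasis ℝ V).equivFunL
  have hU' : e.symm ⁻¹' U ∈ 𝓝 (e c) := e.symm.continuous.continuousAt (by simpa using hU)
  obtain ⟨r, hr, hrU⟩ := nhds_basis_closedBall.mem_iff.1 hU'
  refine ⟨e ⁻¹' closedBall (e c) r, e.continuous.continuousAt (closedBall_mem_nhds _ hr),
    fun x hx => by simpa using hrU hx,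
    (IsSpectrahedralShadow.pi_closedBall _ hr.le).preimage e.toLinearEquiv.toLinearMap⟩

lemma isSpectrahedralShadow_of_forall_isShadowAt (hcpt : IsCompact S) (hconv : Convex ℝ S)
    (hS : ∀ u ∈ S, IsShadowAt S u) : IsSpectrahedralShadow S := by
  have hpiece : ∀ u ∈ S, ∃ C ⊆ S, IsSpectrahedralShadow C ∧ C ∈ 𝓝[S] u := by
    intro u hu
    obtain ⟨R, hR, hRS⟩ := hS u hu
    rw [eventuallyEq_set] at hRS
    obtain ⟨B, hB, hBU, hBshadow⟩ := exists_isSpectrahedralShadow_mem_nhds hRS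
    refine ⟨R ∩ B, fun x hx => (hBU hx.2).1 hx.1, hR.inter hBshadow, ?_⟩
    filter_upwards [mem_nhdsWithin_of_mem_nhds hB, self_mem_nhdsWithin] with x hxB hxS
    exact ⟨(hBU hxB).2 hxS, hxB⟩
  choose! C hCS hC hCu using hpiece
  obtain ⟨t, htS, ht⟩ := hcpt.elim_nhdsWithin_subcover C hCu
  have hhull : S = convexHull ℝ (⋃ u ∈ t, C u) :=
    (ht.trans (subset_convexHull ℝ _)).antisymm
      (convexHull_min (iUnion₂_subset fun u hu => hCS u (htS u hu)) hconv)
  rw [hhull]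
  exact .convexHull_biUnion t (fun u hu => hC u (htS u hu))
    fun u hu => hcpt.isBounded.subset (hCS u (htS u hu))

end Local

/-! ### Gradients and Hessians at points of an algebra -/

section Calculus

variable {σ A B : Type*} [CommRing A] [Algebra ℝ A] [CommRing B] [Algebra ℝ B]

/-- The gradient of `p` at a point `z` with coordinates in an `ℝ`-algebra. -/
def gradientAt (p : MvPolynomial σ ℝ) (z : σ → A) : σ → A :=
  fun i => aeval z (pderiv i p)

/-- The Hessian of `p` at a point `z` with coordinates in an `ℝ`-algebra. -/
def hessianAt (p : MvPolynomial σ ℝ) (z : σ → A) : Matrix σ σ A :=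
  .of fun i j => aeval z (pderiv i (pderiv j p))

lemma hessianAt_map (p : MvPolynomial σ ℝ) (z : σ → A) (φ : A →ₐ[ℝ] B) :
    hessianAt p (φ ∘ z) = (hessianAt p z).map φ := by
  ext i j
  exact (comp_aeval_apply z φ _).symm

lemma pderiv_comm (i j : σ) (p : MvPolynomial σ ℝ) :
    pderiv i (pderiv j p) = pderiv j (pderiv i p) := by
  classical
  have hconst : ∀ k l m : σ,
      pderiv k (Pi.single (M := fun _ => MvPolynomial σ ℝ) l 1 m) = 0 := fun k l m => by
    rw [Pi.single_apply]
    split_ifs <;> simp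
  have hbracket : ⁅pderiv i, pderiv j⁆ = (0 : Derivation ℝ (MvPolynomial σ ℝ) _) :=
    derivation_ext fun k => by
      rw [Derivation.commutator_apply, pderiv_X, pderiv_X, hconst, hconst, sub_zero,
        Derivation.coe_zero, Pi.zero_apply]
  rw [← sub_eq_zero, ← Derivation.commutator_apply, hbracket, Derivation.coe_zero,
    Pi.zero_apply]

lemma hessianAt_isSymm (p : MvPolynomial σ ℝ) (z : σ → A) : (hessianAt p z).IsSymm := by
  ext i j
  simp [hessianAt, pderiv_comm i j]

lemma gradientAt_mul (p q : MvPolynomial σ ℝ) (z : σ → A) :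
    gradientAt (p * q) z = aeval z p • gradientAt q z + aeval z q • gradientAt p z := by
  ext i
  simp [gradientAt]

lemma gradientAt_X [DecidableEq σ] (i : σ) (z : σ → A) :
    gradientAt (X i) z = Pi.single i 1 := by
  ext j
  rcases eq_or_ne i j with rfl | hij
  · simp [gradientAt]
  · simp [gradientAt, pderiv_X_of_ne hij, hij]

variable [Fintype σ]

lemma hasDerivAt_aeval_line (L : A →ₗ[ℝ] ℝ) (p : MvPolynomial σ ℝ) (z y : σ → A) (s : ℝ) :
    HasDerivAt (fun s : ℝ => L (aeval (z + s • y) p))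
      (L (gradientAt p (z + s • y) ⬝ᵥ y)) s := by
  classical
  induction p using MvPolynomial.induction_on generalizing L with
  | C a => simpa [gradientAt, dotProduct] using hasDerivAt_const s _
  | add p q hp hq =>
    refine (((hp L).add (hq L)).congr_deriv ?_).congr_of_eventuallyEq (.of_forall fun t => ?_)
    · simp [gradientAt, dotProduct, add_mul, Finset.sum_add_distrib]
    · simp
  | mul_X p i hp =>
    have hz := hp (L ∘ₗ .mulLeft ℝ (z i))
    have hy := hp (L ∘ₗ .mulLeft ℝ (y i))
    refine ((hz.add ((hasDerivAt_id s).mul hy)).congr_deriv ?_).congr_of_eventuallyEq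
      (.of_forall fun t => ?_)
    · simp only [gradientAt_mul, gradientAt_X, aeval_X, Pi.add_apply, Pi.smul_apply,
        add_dotProduct, smul_dotProduct, single_dotProduct, map_add, map_smul, smul_eq_mul,
        mul_comm, add_mul, Algebra.smul_mul_assoc, LinearMap.coe_comp, Function.comp_apply,
        LinearMap.mulLeft_apply, id_eq, one_mul, mul_one]
      ring
    · simp [mul_comm, add_mul]

lemma hasDerivAt_gradientAt_line (L : A →ₗ[ℝ] ℝ) (p : MvPolynomial σ ℝ) (z y : σ → A) (s : ℝ) :
    HasDerivAt (fun s : ℝ => L (gradientAt p (z + s • y) ⬝ᵥ y))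
      (L (y ⬝ᵥ hessianAt p (z + s • y) *ᵥ y)) s := by
  have hsum : L (y ⬝ᵥ hessianAt p (z + s • y) *ᵥ y) =
      ∑ i, (L ∘ₗ .mulLeft ℝ (y i)) (gradientAt (pderiv i p) (z + s • y) ⬝ᵥ y) := by
    simp only [dotProduct, Matrix.mulVec, map_sum, LinearMap.comp_apply, LinearMap.mulLeft_apply,
      Finset.mul_sum]
    exact Finset.sum_congr rfl fun i _ => Finset.sum_congr rfl fun j _ => by
      simp [hessianAt, gradientAt, pderiv_comm i j]
  rw [hsum]
  refine (HasDerivAt.fun_sum fun i _ =>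
    hasDerivAt_aeval_line (L ∘ₗ .mulLeft ℝ (y i)) (pderiv i p) z y s).congr_of_eventuallyEq
      (.of_forall fun t => ?_)
  simp [dotProduct, gradientAt, mul_comm]

lemma apply_aeval_add_le {L : A →ₗ[ℝ] ℝ} {p : MvPolynomial σ ℝ} {z y : σ → A}
    (h : ∀ s ∈ Icc (0 : ℝ) 1, L (y ⬝ᵥ hessianAt p (z + s • y) *ᵥ y) ≤ 0) :
    L (aeval (z + y) p) ≤ L (aeval z p) + L (gradientAt p z ⬝ᵥ y) := by
  have hφ := hasDerivAt_aeval_line L p z y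
  have hφ' := hasDerivAt_gradientAt_line L p z y
  have hanti : AntitoneOn (fun s : ℝ => L (gradientAt p (z + s • y) ⬝ᵥ y)) (Icc 0 1) :=
    antitoneOn_of_hasDerivWithinAt_nonpos (convex_Icc 0 1)
      (fun s _ => (hφ' s).continuousAt.continuousWithinAt)
      (fun s _ => (hφ' s).hasDerivWithinAt) fun s hs => h s (interior_subset hs)
  have hzero : (0 : ℝ) ∈ Icc (0 : ℝ) 1 := left_mem_Icc.2 zero_le_one
  have hmvt := (convex_Icc (0 : ℝ) 1).image_sub_le_mul_sub_of_deriv_le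
    (fun s _ => (hφ s).continuousAt.continuousWithinAt)
    (fun s _ => (hφ s).differentiableAt.differentiableWithinAt)
    (fun s hs => (hφ s).deriv.trans_le
      (hanti hzero (interior_subset hs) (interior_subset hs).1))
    0 hzero 1 (right_mem_Icc.2 zero_le_one) zero_le_one
  simp only [zero_smul, one_smul, add_zero, sub_zero, mul_one] at hmvt
  linarith

/-- Jensen's inequality, with `L` in the role of the expectation. -/
lemma apply_aeval_le_eval {L : A →ₗ[ℝ] ℝ} (hL : L 1 = 1) {p : MvPolynomial σ ℝ} {x : σ → A}
    {u : σ → ℝ} (hu : ∀ i, L (x i) = u i)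
    (h : ∀ s ∈ Icc (0 : ℝ) 1, L ((x - algebraMap ℝ A ∘ u) ⬝ᵥ
      hessianAt p (algebraMap ℝ A ∘ u + s • (x - algebraMap ℝ A ∘ u)) *ᵥ
        (x - algebraMap ℝ A ∘ u)) ≤ 0) :
    L (aeval x p) ≤ eval u p := by
  have hLc : ∀ r a, L (algebraMap ℝ A r * a) = r * L a := fun r a => by
    simp [← Algebra.smul_def]
  have haeval : ∀ q : MvPolynomial σ ℝ,
      aeval (algebraMap ℝ A ∘ u) q = algebraMap ℝ A (eval u q) := fun q =>
    aeval_algebraMap_apply A u q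
  have hy : ∀ i, L (x i - algebraMap ℝ A (u i)) = 0 := fun i => by
    simpa [hu, hL, sub_eq_zero] using (hLc (u i) 1).symm
  have hle := apply_aeval_add_le h
  have hgrad : L (gradientAt p (algebraMap ℝ A ∘ u) ⬝ᵥ (x - algebraMap ℝ A ∘ u)) = 0 := by
    simp [dotProduct, gradientAt, haeval, hLc, hy]
  have hconst : L (aeval (algebraMap ℝ A ∘ u) p) = eval u p := by
    simpa [haeval, hL] using hLc (eval u p) 1
  rwa [add_sub_cancel, hgrad, hconst, add_zero] at hle

end Calculus

/-! ### Quadratic modules -/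

section QuadraticModule

variable {A : Type*} [CommRing A] [Algebra ℝ A] {G : Set A}

/-- The conic combinations of the products `g * a ^ 2` with `g ∈ G ∪ {1}` and `a ∈ U`.  For `U` the
polynomials of degree at most `N` this is a truncation of the quadratic module of `G`. -/
def truncatedQuadraticModule (U : Submodule ℝ A) (G : Set A) : PointedCone ℝ A :=
  .hull ℝ (image2 (fun g a => g * a ^ 2) (insert 1 G) U)

lemma mul_sq_mem_truncatedQuadraticModule {U : Submodule ℝ A} {g a : A} (hg : g ∈ insert 1 G)
    (ha : a ∈ U) : g * a ^ 2 ∈ truncatedQuadraticModule U G :=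
  PointedCone.subset_hull ⟨g, hg, a, ha, rfl⟩

lemma truncatedQuadraticModule_mono {U V : Submodule ℝ A} (h : U ≤ V) :
    truncatedQuadraticModule U G ≤ truncatedQuadraticModule V G :=
  Submodule.span_mono (image2_subset_left h)

lemma forall_mem_truncatedQuadraticModule_nonneg_iff {U : Submodule ℝ A} {L : A →ₗ[ℝ] ℝ} :
    (∀ f ∈ truncatedQuadraticModule U G, 0 ≤ L f) ↔
      ∀ g ∈ insert 1 G, ∀ a ∈ U, 0 ≤ L (g * a ^ 2) :=
  (Submodule.span_le (p := (PointedCone.positive ℝ ℝ).comap L)).trans image2_subset_iff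

lemma map_nonneg_of_mem_truncatedQuadraticModule {U : Submodule ℝ A} (φ : A →ₐ[ℝ] ℝ)
    (hφ : ∀ g ∈ G, 0 ≤ φ g) {f : A} (hf : f ∈ truncatedQuadraticModule U G) : 0 ≤ φ f := by
  refine forall_mem_truncatedQuadraticModule_nonneg_iff (L := φ.toLinearMap).2
    (fun g hg a _ => ?_) f hf
  rw [AlgHom.toLinearMap_apply, map_mul, map_pow]
  exact mul_nonneg (hg.elim (fun h => by simp [h]) (hφ g)) (sq_nonneg _)

lemma isShadowCone_setOf_nonneg_on_truncatedQuadraticModule (U : Submodule ℝ A)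
    [Module.Finite ℝ U] (hG : G.Finite) :
    IsShadowCone {L : A →ₗ[ℝ] ℝ | ∀ f ∈ truncatedQuadraticModule U G, 0 ≤ L f} := by
  have := (hG.insert 1).to_subtype
  convert IsShadowCone.iInter fun g : ↥(insert 1 G) => IsShadowCone.setOf_nonneg_mul_sq U (g : A)
  ext L
  simp [forall_mem_truncatedQuadraticModule_nonneg_iff]

/-- The quadratic module generated by `G`. -/
def quadraticModule (G : Set A) : PointedCone ℝ A :=
  truncatedQuadraticModule ⊤ G

lemma mul_sq_mem_quadraticModule {g : A} (hg : g ∈ insert 1 G) (a : A) :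
    g * a ^ 2 ∈ quadraticModule G :=
  mul_sq_mem_truncatedQuadraticModule hg trivial

lemma sq_mem_quadraticModule (a : A) : a ^ 2 ∈ quadraticModule G := by
  simpa using mul_sq_mem_quadraticModule (mem_insert 1 G) a

lemma mem_quadraticModule {g : A} (hg : g ∈ G) : g ∈ quadraticModule G := by
  simpa using mul_sq_mem_quadraticModule (mem_insert_of_mem 1 hg) 1

lemma sq_mul_mem_quadraticModule (a : A) {m : A} (hm : m ∈ quadraticModule G) :
    a ^ 2 * m ∈ quadraticModule G := by
  induction hm using Submodule.span_induction with
  | mem _ h =>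
    obtain ⟨g, hg, b, -, rfl⟩ := h
    convert mul_sq_mem_quadraticModule hg (a * b) using 1
    ring
  | zero => simp
  | add _ _ _ _ h h' => simpa [mul_add] using add_mem h h'
  | smul r _ _ h => simpa only [mul_smul_comm] using Submodule.smul_mem _ r h

lemma algebraMap_mul_mem_quadraticModule {r : ℝ} (hr : 0 ≤ r) {m : A}
    (hm : m ∈ quadraticModule G) : algebraMap ℝ A r * m ∈ quadraticModule G :=
  Algebra.smul_def r m ▸ (quadraticModule G).smul_mem hr hm

lemma algebraMap_mul_mem_quadraticModule_iff {r : ℝ} (hr : 0 < r) {m : A} :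
    algebraMap ℝ A r * m ∈ quadraticModule G ↔ m ∈ quadraticModule G :=
  Algebra.smul_def r m ▸ (quadraticModule G).smul_mem_iff hr

lemma algebraMap_mem_quadraticModule {r : ℝ} (hr : 0 ≤ r) :
    algebraMap ℝ A r ∈ quadraticModule G := by
  simpa using algebraMap_mul_mem_quadraticModule hr (sq_mem_quadraticModule (G := G) 1)

lemma dotProduct_transpose_mul_self_mem_quadraticModule {κ σ : Type*} [Fintype κ] [Fintype σ]
    (W : Matrix κ σ A) (y : σ → A) : y ⬝ᵥ (Wᵀ * W) *ᵥ y ∈ quadraticModule G := by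
  rw [← Matrix.mulVec_mulVec, Matrix.dotProduct_mulVec, Matrix.vecMul_transpose]
  exact sum_mem fun k _ => sq ((W *ᵥ y) k) ▸ sq_mem_quadraticModule _

open scoped MatrixOrder Matrix.Norms.L2Operator in
lemma dotProduct_map_posSemidef_mem_quadraticModule {σ : Type*} [Fintype σ]
    {Q : Matrix σ σ ℝ} (hQ : Q.PosSemidef) (y : σ → A) :
    y ⬝ᵥ Q.map (algebraMap ℝ A) *ᵥ y ∈ quadraticModule G := by
  classical
  obtain ⟨B, rfl⟩ := CStarAlgebra.nonneg_iff_eq_star_mul_self.1 hQ.nonneg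
  simpa [Matrix.star_eq_conjTranspose, Matrix.map_mul, Matrix.transpose_map] using
    dotProduct_transpose_mul_self_mem_quadraticModule (B.map (algebraMap ℝ A)) y

/-- `-η ≤ f ≤ η` modulo the quadratic module generated by `G`. -/
def IsBoundedMod (G : Set A) (η : ℝ) (f : A) : Prop :=
  algebraMap ℝ A η + f ∈ quadraticModule G ∧ algebraMap ℝ A η - f ∈ quadraticModule G

namespace IsBoundedMod

variable {ε η : ℝ} {f g : A}

lemma zero (hη : 0 ≤ η) : IsBoundedMod G η 0 := by
  simpa [IsBoundedMod] using algebraMap_mem_quadraticModule hη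

lemma add (hf : IsBoundedMod G ε f) (hg : IsBoundedMod G η g) :
    IsBoundedMod G (ε + η) (f + g) := by
  refine ⟨?_, ?_⟩
  · convert add_mem hf.1 hg.1 using 1
    rw [map_add]
    ring
  · convert add_mem hf.2 hg.2 using 1
    rw [map_add]
    ring

lemma mono (hf : IsBoundedMod G ε f) (h : ε ≤ η) : IsBoundedMod G η f := by
  simpa using hf.add (zero (sub_nonneg.2 h))

lemma neg (hf : IsBoundedMod G η f) : IsBoundedMod G η (-f) :=
  ⟨by simpa [sub_eq_add_neg] using hf.2, by simpa using hf.1⟩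

lemma algebraMap_mul (hf : IsBoundedMod G η f) (r : ℝ) :
    IsBoundedMod G (|r| * η) (algebraMap ℝ A r * f) := by
  wlog hr : 0 ≤ r generalizing r f
  · simpa using this hf.neg (-r) (by linarith)
  · rw [abs_of_nonneg hr]
    simpa [IsBoundedMod, mul_add, mul_sub] using
      And.intro (algebraMap_mul_mem_quadraticModule hr hf.1)
        (algebraMap_mul_mem_quadraticModule hr hf.2)

lemma sub_sq_mem (hη : 0 < η) (hf : IsBoundedMod G η f) :
    algebraMap ℝ A (η ^ 2) - f ^ 2 ∈ quadraticModule G := by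
  rw [← algebraMap_mul_mem_quadraticModule_iff (by positivity : 0 < 2 * η)]
  convert add_mem (sq_mul_mem_quadraticModule (algebraMap ℝ A η - f) hf.1)
    (sq_mul_mem_quadraticModule (algebraMap ℝ A η + f) hf.2) using 1
  simp only [map_mul, map_pow, map_ofNat]
  ring

lemma of_sub_sq_mem (hη : 0 < η) (hf : algebraMap ℝ A (η ^ 2) - f ^ 2 ∈ quadraticModule G) :
    IsBoundedMod G η f := by
  refine ⟨?_, ?_⟩ <;> rw [← algebraMap_mul_mem_quadraticModule_iff (by positivity : 0 < 2 * η)]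
  · convert add_mem hf (sq_mem_quadraticModule (algebraMap ℝ A η + f)) using 1
    simp only [map_mul, map_pow, map_ofNat]
    ring
  · convert add_mem hf (sq_mem_quadraticModule (algebraMap ℝ A η - f)) using 1
    simp only [map_mul, map_pow, map_ofNat]
    ring

lemma mul (hε : 0 < ε) (hf : IsBoundedMod G ε f) (hg : IsBoundedMod G ε g) :
    IsBoundedMod G (ε ^ 2) (f * g) := by
  have hadd := (hf.add hg).sub_sq_mem (by positivity)
  have hsub := (hf.add hg.neg).sub_sq_mem (by positivity)
  refine ⟨?_, ?_⟩ <;> rw [← algebraMap_mul_mem_quadraticModule_iff four_pos]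
  · convert add_mem hsub (sq_mem_quadraticModule (f + g)) using 1
    simp only [map_add, map_pow, map_ofNat]
    ring
  · convert add_mem hadd (sq_mem_quadraticModule (f - g)) using 1
    simp only [map_add, map_pow, map_ofNat]
    ring

lemma card_mul_add_dotProduct_mulVec_mem {σ : Type*} [Fintype σ] {E : Matrix σ σ A}
    (hE : ∀ i j, IsBoundedMod G η (E i j)) (y : σ → A) :
    algebraMap ℝ A (η * Fintype.card σ) * (y ⬝ᵥ y) + y ⬝ᵥ E *ᵥ y ∈ quadraticModule G := by
  have hentry : ∀ i j, algebraMap ℝ A (η / 2) * (y i ^ 2 + y j ^ 2) + y i * E i j * y j ∈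
      quadraticModule G := fun i j => by
    rw [← algebraMap_mul_mem_quadraticModule_iff four_pos]
    convert add_mem (sq_mul_mem_quadraticModule (y i + y j) (hE i j).1)
      (sq_mul_mem_quadraticModule (y i - y j) (hE i j).2) using 1
    have hη : algebraMap ℝ A η = 2 * algebraMap ℝ A (η / 2) := by
      rw [← map_ofNat (algebraMap ℝ A), ← map_mul]
      ring_nf
    rw [map_ofNat, hη]
    ring
  convert sum_mem fun i (_ : i ∈ Finset.univ) => sum_mem fun j (_ : j ∈ Finset.univ) =>
    hentry i j using 1
  have hquad : y ⬝ᵥ E *ᵥ y = ∑ i, ∑ j, y i * E i j * y j := by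
    simp [dotProduct, Matrix.mulVec, Finset.mul_sum, mul_assoc]
  have hη : algebraMap ℝ A (η * Fintype.card σ) =
      algebraMap ℝ A (η / 2) * (Fintype.card σ + Fintype.card σ) := by
    rw [← map_natCast (algebraMap ℝ A), ← map_add, ← map_mul]
    ring_nf
  rw [hquad]
  simp only [Finset.sum_add_distrib, ← Finset.mul_sum, Finset.sum_const, Finset.card_univ,
    nsmul_eq_mul, hη, dotProduct, ← sq]
  ring

end IsBoundedMod

/-- Polynomial inequalities describing the box `|z i - c i| ≤ δ`, at a point `z` with
coordinates in an `ℝ`-algebra. -/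
def boxConstraints {σ : Type*} (c : σ → ℝ) (δ : ℝ) (z : σ → A) : Set A :=
  range fun i => algebraMap ℝ A (δ ^ 2) - (z i - algebraMap ℝ A (c i)) ^ 2

section Box

variable {σ : Type*} (c : σ → ℝ) (z : σ → A)

lemma isBoundedMod_boxConstraints {δ : ℝ} (hδ : 0 < δ) (i : σ) :
    IsBoundedMod (boxConstraints c δ z) δ (z i - algebraMap ℝ A (c i)) :=
  .of_sub_sq_mem hδ (mem_quadraticModule (mem_range_self i))

/-- The quadratic modules of small boxes detect the continuity of `f` at `c`. -/
lemma eventually_isBoundedMod_aeval_sub (f : MvPolynomial σ ℝ) {η : ℝ} (hη : 0 < η) :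
    ∀ᶠ δ in 𝓝[>] 0,
      IsBoundedMod (boxConstraints c δ z) η (aeval z f - algebraMap ℝ A (eval c f)) := by
  induction f using MvPolynomial.induction_on generalizing η with
  | C a => simpa using .of_forall fun δ => IsBoundedMod.zero hη.le
  | add f g hf hg =>
    filter_upwards [hf (half_pos hη), hg (half_pos hη)] with δ hf hg
    convert hf.add hg using 1 <;> simp
    ring
  | mul_X f i hf =>
    obtain ⟨ε, ⟨hε, hε1⟩, hεη⟩ : ∃ ε ∈ Ioc (0 : ℝ) 1, (1 + |c i| + |eval c f|) * ε ≤ η := by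
      have hK : 0 < 1 + |c i| + |eval c f| := by positivity
      refine ⟨min 1 (η / (1 + |c i| + |eval c f|)), ⟨by positivity, min_le_left _ _⟩, ?_⟩
      rw [← le_div_iff₀' hK]
      exact min_le_right _ _
    filter_upwards [hf hε, Ioc_mem_nhdsGT hε] with δ hf ⟨hδ, hδε⟩
    have hz := (isBoundedMod_boxConstraints c z hδ i).mono hδε
    have hsum := ((hf.mul hε hz).add (hf.algebraMap_mul (c i))).add
      (hz.algebraMap_mul (eval c f))
    convert hsum.mono (by nlinarith : _ ≤ η) using 1
    simp only [map_mul, aeval_X, eval_X]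
    ring

open scoped MatrixOrder Matrix.Norms.L2Operator in
lemma exists_posSemidef_sub_smul_one [Finite σ] [Nonempty σ] [DecidableEq σ]
    {Q : Matrix σ σ ℝ} (hQ : Q.PosDef) :
    ∃ κ : ℝ, 0 < κ ∧ (Q - κ • (1 : Matrix σ σ ℝ)).PosSemidef := by
  cases nonempty_fintype σ
  obtain ⟨κ, hκ, hκQ⟩ := (CFC.exists_pos_algebraMap_le_iff hQ.isHermitian).2
    fun _ => hQ.isStrictlyPositive.spectrum_pos
  exact ⟨κ, hκ, by rwa [Matrix.le_iff, Algebra.algebraMap_eq_smul_one] at hκQ⟩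

variable [Fintype σ]

lemma eventually_neg_dotProduct_hessianAt_mem_quadraticModule {p : MvPolynomial σ ℝ}
    (hp : (-hessianAt p c).PosDef) (y : σ → A) :
    ∀ᶠ δ in 𝓝[>] 0,
      -(y ⬝ᵥ hessianAt p z *ᵥ y) ∈ quadraticModule (boxConstraints c δ z) := by
  classical
  rcases isEmpty_or_nonempty σ with _ | _
  · simp [dotProduct]
  obtain ⟨κ, hκ, hpos⟩ := exists_posSemidef_sub_smul_one hp
  have hcard : (0 : ℝ) < Fintype.card σ := by positivity
  let H := (hessianAt p c).map (algebraMap ℝ A)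
  have hentries : ∀ᶠ δ in 𝓝[>] 0, ∀ i j, IsBoundedMod (boxConstraints c δ z)
      (κ / Fintype.card σ) ((H - hessianAt p z) i j) := by
    simp only [eventually_all]
    intro i j
    filter_upwards [eventually_isBoundedMod_aeval_sub c z (pderiv i (pderiv j p))
      (div_pos hκ hcard)] with δ hδ
    simpa [H, hessianAt, aeval_eq_eval] using hδ.neg
  filter_upwards [hentries] with δ hδ
  convert add_mem (dotProduct_map_posSemidef_mem_quadraticModule hpos y)
    (IsBoundedMod.card_mul_add_dotProduct_mulVec_mem hδ y) using 1
  have hmap : (-hessianAt p c - κ • (1 : Matrix σ σ ℝ)).map (algebraMap ℝ A) =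
      -H - κ • (1 : Matrix σ σ A) := by
    ext i j
    rcases eq_or_ne i j with rfl | hij
    · simp [H, Algebra.algebraMap_eq_smul_one, sub_smul]
    · simp [H, hij]
  rw [hmap, div_mul_cancel₀ _ hcard.ne', ← Algebra.smul_def]
  simp only [Matrix.sub_mulVec, Matrix.neg_mulVec, Matrix.smul_mulVec, Matrix.one_mulVec,
    dotProduct_sub, dotProduct_neg, dotProduct_smul]
  abel

end Box

end QuadraticModule

/-! ### Moment relaxations -/

section Moment

variable {σ : Type*}

lemma totalDegree_aeval_le {τ : Type*} {z : σ → MvPolynomial τ ℝ}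
    (hz : ∀ i, (z i).totalDegree ≤ 1) (p : MvPolynomial σ ℝ) :
    (aeval z p).totalDegree ≤ p.totalDegree := by
  rw [aeval_def, eval₂_eq]
  refine totalDegree_finsetSum_le fun m hm => ?_
  calc (algebraMap ℝ _ (coeff m p) * ∏ i ∈ m.support, z i ^ m i).totalDegree
    _ ≤ ∑ i ∈ m.support, (z i ^ m i).totalDegree := by
      refine (totalDegree_mul _ _).trans ?_
      rw [MvPolynomial.algebraMap_eq, totalDegree_C, zero_add]
      exact totalDegree_finsetProd _ _
    _ ≤ ∑ i ∈ m.support, m i := Finset.sum_le_sum fun i _ =>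
      (totalDegree_pow _ _).trans (mul_le_of_le_one_right' (hz i))
    _ ≤ p.totalDegree := le_totalDegree hm

/-- With `Z = X ∘ Sum.inl` and `Y = X ∘ Sum.inr`, the substitution `Z ↦ u + s • (X - u)`,
`Y ↦ X - u`: the point at parameter `s` of the segment from `u` to `X`, and its direction. -/
def segmentHom (u : σ → ℝ) (s : ℝ) : MvPolynomial (σ ⊕ σ) ℝ →ₐ[ℝ] MvPolynomial σ ℝ :=
  aeval (Sum.elim (C ∘ u + s • (X - C ∘ u)) (X - C ∘ u))

lemma totalDegree_segmentHom_le (u : σ → ℝ) (s : ℝ) (f : MvPolynomial (σ ⊕ σ) ℝ) :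
    (segmentHom u s f).totalDegree ≤ f.totalDegree := by
  have hdir : ∀ i, (X i - C (u i)).totalDegree ≤ 1 := fun i =>
    (totalDegree_sub_C_le _ _).trans (totalDegree_X i).le
  refine totalDegree_aeval_le (Sum.rec (fun i => ?_) hdir) f
  refine (totalDegree_add _ _).trans (max_le (by simp) ?_)
  exact (totalDegree_smul_le _ _).trans (hdir i)

lemma segmentHom_boxConstraint (c u : σ → ℝ) (δ s : ℝ) (i : σ) :
    segmentHom u s (algebraMap ℝ _ (δ ^ 2) - (X (.inl i) - algebraMap ℝ _ (c i)) ^ 2) =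
      s • (algebraMap ℝ _ (δ ^ 2) - (X i - algebraMap ℝ _ (c i)) ^ 2) +
        ((1 - s) * (δ ^ 2 - (u i - c i) ^ 2)) • 1 + (s * (1 - s)) • (X i - C (u i)) ^ 2 := by
  simp only [segmentHom, MvPolynomial.algebraMap_eq, MvPolynomial.smul_eq_C_mul, map_sub, map_pow,
    map_mul, map_one, aeval_C, aeval_X, Sum.elim_inl, Pi.add_apply, Pi.smul_apply, Pi.sub_apply,
    Function.comp_apply]
  ring

variable {c u : σ → ℝ} {δ s : ℝ}

lemma segmentHom_mul_sq_mem_truncatedQuadraticModule (hu : ∀ i, |u i - c i| ≤ δ)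
    (hs : s ∈ Icc (0 : ℝ) 1) {g : MvPolynomial (σ ⊕ σ) ℝ}
    (hg : g ∈ insert 1 (boxConstraints c δ (X ∘ Sum.inl))) (a : MvPolynomial (σ ⊕ σ) ℝ) :
    segmentHom u s (g * a ^ 2) ∈ truncatedQuadraticModule
      (restrictTotalDegree σ ℝ (a.totalDegree + 1)) (boxConstraints c δ X) := by
  have ha := totalDegree_segmentHom_le u s a
  have hsq : ∀ b : MvPolynomial σ ℝ, b.totalDegree ≤ a.totalDegree + 1 → b ^ 2 ∈
      truncatedQuadraticModule (restrictTotalDegree σ ℝ (a.totalDegree + 1))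
        (boxConstraints c δ X) := fun b hb => by
    simpa using mul_sq_mem_truncatedQuadraticModule (mem_insert 1 _)
      ((mem_restrictTotalDegree _ _ b).2 hb)
  rw [map_mul, map_pow]
  rcases hg with rfl | ⟨i, rfl⟩
  · simpa using hsq _ (ha.trans (Nat.le_succ _))
  have hδ : (u i - c i) ^ 2 ≤ δ ^ 2 := sq_le_sq.2 ((hu i).trans (le_abs_self δ))
  have hdeg : ((X i - C (u i)) * segmentHom u s a).totalDegree ≤ a.totalDegree + 1 := by
    refine (totalDegree_mul _ _).trans ?_
    have := (totalDegree_sub_C_le (X i) (u i)).trans (totalDegree_X (R := ℝ) i).le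
    omega
  simp only [Function.comp_apply, segmentHom_boxConstraint, add_mul, smul_mul_assoc, one_mul,
    ← mul_pow]
  refine add_mem (add_mem (PointedCone.smul_mem _ hs.1 ?_) (PointedCone.smul_mem _ ?_ ?_))
    (PointedCone.smul_mem _ (mul_nonneg hs.1 (sub_nonneg.2 hs.2)) (hsq _ hdeg))
  · exact mul_sq_mem_truncatedQuadraticModule (mem_insert_of_mem _ (mem_range_self i))
      ((mem_restrictTotalDegree _ _ _).2 (ha.trans (Nat.le_succ _)))
  · exact mul_nonneg (sub_nonneg.2 hs.2) (sub_nonneg.2 hδ)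
  · exact hsq _ (ha.trans (Nat.le_succ _))

lemma exists_forall_segmentHom_mem_truncatedQuadraticModule {f : MvPolynomial (σ ⊕ σ) ℝ}
    (hf : f ∈ quadraticModule (boxConstraints c δ (X ∘ Sum.inl))) :
    ∃ N, ∀ u : σ → ℝ, (∀ i, |u i - c i| ≤ δ) → ∀ s ∈ Icc (0 : ℝ) 1, segmentHom u s f ∈
      truncatedQuadraticModule (restrictTotalDegree σ ℝ N) (boxConstraints c δ X) := by
  induction hf using Submodule.span_induction with
  | mem _ h =>
    obtain ⟨g, hg, a, -, rfl⟩ := h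
    exact ⟨_, fun u hu s hs => segmentHom_mul_sq_mem_truncatedQuadraticModule hu hs hg a⟩
  | zero => exact ⟨0, by simp⟩
  | add f g _ _ hf hg =>
    obtain ⟨⟨N, hN⟩, M, hM⟩ := And.intro hf hg
    have hmono : ∀ {K L : ℕ}, K ≤ L →
        restrictTotalDegree σ ℝ K ≤ restrictTotalDegree σ ℝ L := fun hKL p hp => by
      rw [mem_restrictTotalDegree] at hp ⊢
      exact hp.trans hKL
    refine ⟨max N M, fun u hu s hs => ?_⟩
    rw [map_add]
    exact add_mem (truncatedQuadraticModule_mono (hmono (le_max_left N M)) (hN u hu s hs))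
      (truncatedQuadraticModule_mono (hmono (le_max_right N M)) (hM u hu s hs))
  | smul r f _ hf =>
    obtain ⟨N, hN⟩ := hf
    refine ⟨N, fun u hu s hs => ?_⟩
    change segmentHom u s ((r : ℝ) • f) ∈ _
    rw [map_smul]
    exact PointedCone.smul_mem _ r.2 (hN u hu s hs)

lemma dotProduct_hessianAt_segment [Fintype σ] (p : MvPolynomial σ ℝ) (u : σ → ℝ) (s : ℝ) :
    segmentHom u s ((X ∘ Sum.inr) ⬝ᵥ hessianAt p (X ∘ Sum.inl) *ᵥ (X ∘ Sum.inr)) =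
      (X - C ∘ u) ⬝ᵥ hessianAt p (C ∘ u + s • (X - C ∘ u)) *ᵥ (X - C ∘ u) := by
  have hpoint : segmentHom u s ∘ X ∘ Sum.inl = C ∘ u + s • (X - C ∘ u) := by
    ext1 i
    simp [segmentHom]
  have hdir : segmentHom u s ∘ X ∘ Sum.inr = X - C ∘ u := by
    ext1 i
    simp [segmentHom]
  have hmulVec : segmentHom u s ∘ (hessianAt p (X ∘ Sum.inl) *ᵥ (X ∘ Sum.inr)) =
      hessianAt p (C ∘ u + s • (X - C ∘ u)) *ᵥ (X - C ∘ u) := by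
    ext1 i
    rw [← hpoint, ← hdir, hessianAt_map]
    exact RingHom.map_mulVec (segmentHom u s).toRingHom _ _ i
  rw [← hmulVec, ← hdir]
  exact RingHom.map_dotProduct (segmentHom u s).toRingHom _ _

variable [Fintype σ]

/-- The truncated moment relaxation of `0 ≤ p` on the box is exact, by Jensen's inequality. -/
lemma isSpectrahedralShadow_closedBall_inter_setOf_nonneg {p : MvPolynomial σ ℝ} (hδ : 0 ≤ δ)
    (hp : -((X ∘ Sum.inr) ⬝ᵥ hessianAt p (X ∘ Sum.inl) *ᵥ (X ∘ Sum.inr)) ∈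
      quadraticModule (boxConstraints c δ (X ∘ Sum.inl : σ → MvPolynomial (σ ⊕ σ) ℝ))) :
    IsSpectrahedralShadow (closedBall c δ ∩ {x | 0 ≤ eval x p}) := by
  obtain ⟨N, hN⟩ := exists_forall_segmentHom_mem_truncatedQuadraticModule hp
  let M := truncatedQuadraticModule (restrictTotalDegree σ ℝ N) (boxConstraints c δ X)
  have hball : ∀ x ∈ closedBall c δ, ∀ i, |x i - c i| ≤ δ := fun x hx i =>
    (dist_pi_le_iff hδ).1 hx i
  let moments : (MvPolynomial σ ℝ →ₗ[ℝ] ℝ) →ₗ[ℝ] ℝ × (σ → ℝ) :=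
    (LinearMap.applyₗ 1).prod (.pi fun i => LinearMap.applyₗ (X i))
  have hcone : IsShadowCone (moments '' ({L | ∀ f ∈ M, 0 ≤ L f} ∩ {L | 0 ≤ L p})) :=
    ((isShadowCone_setOf_nonneg_on_truncatedQuadraticModule _ (finite_range _)).inter
      (.setOf_nonneg (LinearMap.applyₗ p))).image moments
  convert (IsSpectrahedralShadow.pi_closedBall c hδ).inter ⟨_, hcone, rfl⟩ using 1
  ext x
  refine and_congr_right fun hx => ⟨fun hpx => ?_, ?_⟩
  · refine ⟨(aeval x).toLinearMap, ⟨fun f hf => ?_, hpx⟩, by ext <;> simp [moments]⟩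
    refine map_nonneg_of_mem_truncatedQuadraticModule (aeval x) ?_ hf
    rintro _ ⟨i, rfl⟩
    simpa using sq_le_sq.2 ((hball x hx i).trans (le_abs_self δ))
  · rintro ⟨L, ⟨hL, hLp⟩, hmoments⟩
    obtain ⟨hL1, hLX⟩ := Prod.mk.inj hmoments
    have hjensen := apply_aeval_le_eval (p := p) hL1 (congrFun hLX) fun s hs => ?_
    · rw [aeval_X_left_apply] at hjensen
      exact hLp.trans hjensen
    · have := hL _ (hN x (hball x hx) s hs)
      rw [map_neg, dotProduct_hessianAt_segment] at this
      simpa using this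

end Moment

/-! ### Concavity and local shadows -/

section LocalConcavity

variable {σ : Type*} {c : σ → ℝ} {p : MvPolynomial σ ℝ}

lemma hessianAt_sub_C_mul_sq (hc : eval c p = 0) (M : ℝ) :
    hessianAt (p - C (M / 2) * p ^ 2) c =
      hessianAt p c - M • Matrix.vecMulVec (gradientAt p c) (gradientAt p c) := by
  ext i j
  simp [hessianAt, gradientAt, aeval_eq_eval, Matrix.vecMulVec_apply, sq, hc]
  ring

variable [Fintype σ]

lemma isShadowAt_setOf_nonneg_of_mem_quadraticModule {δ : ℝ} (hδ : 0 < δ)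
    (hp : -((X ∘ Sum.inr) ⬝ᵥ hessianAt p (X ∘ Sum.inl) *ᵥ (X ∘ Sum.inr)) ∈
      quadraticModule (boxConstraints c δ (X ∘ Sum.inl : σ → MvPolynomial (σ ⊕ σ) ℝ))) :
    IsShadowAt {x | 0 ≤ eval x p} c := by
  refine ⟨_, isSpectrahedralShadow_closedBall_inter_setOf_nonneg hδ.le hp, ?_⟩
  filter_upwards [closedBall_mem_nhds c hδ] with x hx
  exact propext (and_iff_right hx)

lemma isShadowAt_setOf_nonneg_of_neg_hessian_eq {κ : Type*} [Fintype κ]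
    (W : Matrix κ σ (MvPolynomial σ ℝ)) (hW : -hessianAt p X = Wᵀ * W) (c : σ → ℝ) :
    IsShadowAt {x | 0 ≤ eval x p} c := by
  refine isShadowAt_setOf_nonneg_of_mem_quadraticModule one_pos ?_
  let φ : MvPolynomial σ ℝ →ₐ[ℝ] MvPolynomial (σ ⊕ σ) ℝ := rename Sum.inl
  have hφ : -hessianAt p (X ∘ Sum.inl) = (W.map φ)ᵀ * W.map φ := by
    have hX : (X ∘ Sum.inl : σ → MvPolynomial (σ ⊕ σ) ℝ) = φ ∘ X := by
      ext1 i
      simp [φ]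
    rw [hX, hessianAt_map, ← Matrix.transpose_map, ← Matrix.map_mul, ← hW]
    ext1 i j
    simp
  rw [← dotProduct_neg, ← Matrix.neg_mulVec, hφ]
  exact dotProduct_transpose_mul_self_mem_quadraticModule _ _

lemma isShadowAt_setOf_nonneg_of_posDef (hp : (-hessianAt p c).PosDef) :
    IsShadowAt {x | 0 ≤ eval x p} c := by
  have hmem := eventually_neg_dotProduct_hessianAt_mem_quadraticModule c
    (X ∘ Sum.inl : σ → MvPolynomial (σ ⊕ σ) ℝ) hp (X ∘ Sum.inr)
  obtain ⟨δ, hmem, hδ⟩ := (hmem.and self_mem_nhdsWithin).exists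
  exact isShadowAt_setOf_nonneg_of_mem_quadraticModule hδ hmem

lemma dotProduct_add_smul_vecMulVec_mulVec (Q : Matrix σ σ ℝ) (M : ℝ) (a v : σ → ℝ) :
    v ⬝ᵥ (Q + M • Matrix.vecMulVec a a) *ᵥ v = v ⬝ᵥ Q *ᵥ v + M * (a ⬝ᵥ v) ^ 2 := by
  simp only [Matrix.add_mulVec, Matrix.smul_mulVec, Matrix.vecMulVec_mulVec, dotProduct_add,
    dotProduct_smul, op_smul_eq_smul, smul_eq_mul, dotProduct_comm v a]
  ring

/-- Finsler's lemma. -/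
lemma exists_posDef_add_smul_vecMulVec {Q : Matrix σ σ ℝ} (hQ : Q.IsSymm) {a : σ → ℝ}
    (h : ∀ v, v ≠ 0 → a ⬝ᵥ v = 0 → 0 < v ⬝ᵥ Q *ᵥ v) :
    ∃ M : ℝ, (Q + M • Matrix.vecMulVec a a).PosDef := by
  let q (M : ℝ) (v : σ → ℝ) : ℝ := v ⬝ᵥ Q *ᵥ v + M * (a ⬝ᵥ v) ^ 2
  have hq : ∀ M, Continuous (q M) := fun M => by fun_prop
  have hcover : sphere 0 1 ⊆ ⋃ M, {v | 0 < q M v} := fun v hv => by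
    rw [mem_iUnion]
    rcases eq_or_ne (a ⬝ᵥ v) 0 with hav | hav
    · exact ⟨0, by simpa [q] using h v (ne_of_mem_sphere hv one_ne_zero) hav⟩
    · refine ⟨(1 - v ⬝ᵥ Q *ᵥ v) / (a ⬝ᵥ v) ^ 2, ?_⟩
      simp [q, hav]
  have hdirected : Directed (· ⊆ ·) fun M => {v | 0 < q M v} :=
    directed_of_isDirected_le fun M N hMN v (hv : 0 < q M v) =>
      hv.trans_le (add_le_add_right (mul_le_mul_of_nonneg_right hMN (sq_nonneg _)) _)
  obtain ⟨M, hM⟩ := (isCompact_sphere 0 1).elim_directed_cover _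
    (fun M => isOpen_lt continuous_const (hq M)) hcover hdirected
  refine ⟨M, Matrix.posDef_iff_dotProduct_mulVec.2 ⟨?_, fun v hv => ?_⟩⟩
  · ext i j
    simp [Matrix.vecMulVec_apply, hQ.apply i j, mul_comm]
  · have hsphere : ‖v‖⁻¹ • v ∈ sphere (0 : σ → ℝ) 1 := by
      simp [norm_smul, inv_mul_cancel₀ (norm_ne_zero_iff.2 hv)]
    have hscale : q M (‖v‖⁻¹ • v) = (‖v‖⁻¹) ^ 2 * q M v := by
      simp only [q, Matrix.mulVec_smul, dotProduct_smul, smul_dotProduct, smul_eq_mul]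
      ring
    have hpos : 0 < q M (‖v‖⁻¹ • v) := hM hsphere
    rw [hscale] at hpos
    rw [star_trivial, dotProduct_add_smul_vecMulVec_mulVec]
    exact pos_of_mul_pos_right hpos (sq_nonneg _)

lemma isShadowAt_setOf_nonneg_of_neg_hessianAt_pos (hc : eval c p = 0)
    (h : ∀ v, v ≠ 0 → gradientAt p c ⬝ᵥ v = 0 → 0 < -(v ⬝ᵥ hessianAt p c *ᵥ v)) :
    IsShadowAt {x | 0 ≤ eval x p} c := by
  obtain ⟨M, hM⟩ := exists_posDef_add_smul_vecMulVec (hessianAt_isSymm p c).neg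
    fun v hv hgrad => by simpa [Matrix.neg_mulVec] using h v hv hgrad
  have hlocal : IsShadowAt {x | 0 ≤ eval x (p - C (M / 2) * p ^ 2)} c := by
    refine isShadowAt_setOf_nonneg_of_posDef ?_
    rwa [hessianAt_sub_C_mul_sq hc, neg_sub', sub_neg_eq_add]
  have hfactor : ∀ᶠ x in 𝓝 c, 0 < 1 - M / 2 * eval x p := by
    have hcont : Continuous fun x => 1 - M / 2 * eval x p :=
      continuous_const.sub (continuous_const.mul (MvPolynomial.continuous_eval p))
    exact hcont.continuousAt.eventually_const_lt (by simp [hc])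
  refine hlocal.congr (eventuallyEq_set.2 ?_)
  filter_upwards [hfactor] with x hx
  have heval : eval x (p - C (M / 2) * p ^ 2) = eval x p * (1 - M / 2 * eval x p) := by
    simp only [map_sub, map_mul, map_pow, eval_C]
    ring
  simp only [heval, mul_nonneg_iff_of_pos_right hx]

end LocalConcavity

section Peval

variable {n : ℕ} {g : MvPolynomial (Fin n) ℝ} {u : Rn n}

lemma continuous_peval (g : MvPolynomial (Fin n) ℝ) : Continuous (peval g) :=
  (MvPolynomial.continuous_eval g).comp (EuclideanSpace.equiv (Fin n) ℝ).continuous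

lemma isShadowAt_setOf_peval_nonneg
    (h : IsShadowAt {x | 0 ≤ eval x g} (EuclideanSpace.equiv (Fin n) ℝ u)) :
    IsShadowAt {x | 0 ≤ peval g x} u :=
  h.preimage (EuclideanSpace.equiv (Fin n) ℝ).toContinuousLinearMap

lemma SosConcave.isShadowAt (hg : SosConcave g) (u : Rn n) :
    IsShadowAt {x | 0 ≤ peval g x} u := by
  obtain ⟨k, W, hW⟩ := hg
  refine isShadowAt_setOf_peval_nonneg (isShadowAt_setOf_nonneg_of_neg_hessian_eq (.of W) ?_ _)
  ext1 i j
  simpa [hessianAt, Matrix.mul_apply, aeval_X_left_apply] using hW i j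

lemma StrictlyQuasiConcaveAt.isShadowAt (hg : StrictlyQuasiConcaveAt g u) (hu : peval g u = 0) :
    IsShadowAt {x | 0 ≤ peval g x} u := by
  have hgrad : gradientAt g (EuclideanSpace.equiv (Fin n) ℝ u) = pgrad g u := by
    ext i
    simp only [gradientAt, pgrad, aeval_eq_eval]
    rfl
  have hhess : hessianAt g (EuclideanSpace.equiv (Fin n) ℝ u) = phess g u := by
    ext i j
    simp only [hessianAt, phess, aeval_eq_eval, Matrix.of_apply]
    rfl
  refine isShadowAt_setOf_peval_nonneg ?_
  rcases hg with ⟨-, hpos⟩ | ⟨-, hpos⟩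
  · refine isShadowAt_setOf_nonneg_of_neg_hessianAt_pos hu fun v hv hgv => ?_
    rw [hgrad] at hgv
    rw [hhess]
    simpa [dotProduct, Matrix.mulVec, Finset.mul_sum, mul_assoc] using hpos v hv hgv
  · exact isShadowAt_setOf_nonneg_of_posDef (hhess ▸ hpos)

end Peval

theorem isSDPRepresentable_of_sosConcave_or_strictlyQuasiConcave_general {n : ℕ} {ι : Type*}
    [Finite ι] (g : ι → MvPolynomial (Fin n) ℝ) (S : Set (Rn n))
    (hS : S = {x : Rn n | ∀ i, 0 ≤ peval (g i) x}) (hcpt : IsCompact S) (hconv : Convex ℝ S)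
    (h : ∀ u ∈ frontier S, ∀ i, peval (g i) u = 0 →
      SosConcave (g i) ∨ StrictlyQuasiConcaveAt (g i) u) :
    IsSDPRepresentable S := by
  refine (isSpectrahedralShadow_of_forall_isShadowAt hcpt hconv fun u hu => ?_).isSDPRepresentable
  by_cases hinterior : u ∈ interior S
  · exact .of_mem_nhds (mem_interior_iff_mem_nhds.1 hinterior)
  have hfrontier : u ∈ frontier S := ⟨subset_closure hu, hinterior⟩
  rw [hS, ofPred_forall]
  refine .iInter fun i => ?_
  have hnonneg : ∀ i, 0 ≤ peval (g i) u := by rwa [hS] at hu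
  rcases (hnonneg i).eq_or_lt' with hzero | hpos
  · rcases h u hfrontier i hzero with hsos | hstrict
    · exact hsos.isShadowAt u
    · exact hstrict.isShadowAt hzero
  · exact .of_mem_nhds (((continuous_peval (g i)).continuousAt.eventually_const_lt hpos).mono
      fun _ hx => hx.le)

/-- a compact convex basic closed semialgebraic set with nonempty interior
whose defining polynomials are sos-concave or strictly quasi-concave at every boundary
point where they vanish is SDP representable. -/
theorem isSDPRepresentable_of_sosConcave_or_strictlyQuasiConcave {n m : ℕ}
    (g : Fin m → MvPolynomial (Fin n) ℝ) (S : Set (Rn n))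
    (hS : S = {x : Rn n | ∀ i, 0 ≤ peval (g i) x})
    (hcpt : IsCompact S) (hconv : Convex ℝ S) (hint : (interior S).Nonempty)
    (h : ∀ u ∈ frontier S, ∀ i, peval (g i) u = 0 →
      SosConcave (g i) ∨ StrictlyQuasiConcaveAt (g i) u) :
    IsSDPRepresentable S :=
  isSDPRepresentable_of_sosConcave_or_strictlyQuasiConcave_general g S hS hcpt hconv h
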